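/- For every integer n ≥ 3, C^{4,2}_n = 1 + 5·3^{n−3} − 2^{n−3}. -/

import Mathlib

/-- Full binary trees (every internal node has exactly two children). -/
inductive BTree : Type
  | leaf : BTree
  | node : BTree → BTree → BTree
deriving DecidableEq

namespace BTree

/-- Number of leaves of a full binary tree. -/
def numLeaves : BTree → ℕ
  | leaf => 1
  | node l r => l.numLeaves + r.numLeaves

/-- The list of pairs (left depth, right depth) of the leaves, in preorder. -/
def leafDepths : BTree → List (ℕ × ℕ)
  | leaf => [(0, 0)]
  | node l r =>
      (l.leafDepths.map fun p => (p.1 + 1, p.2)) ++ (r.leafDepths.map fun p => (p.1, p.2 + 1))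

/-- The left depth sequence `ld(t)` of the leaves of `t`, in preorder. -/
def ld (t : BTree) : List ℕ := t.leafDepths.map Prod.fst

/-- The right depth sequence `rd(t)` of the leaves of `t`, in preorder. -/
def rd (t : BTree) : List ℕ := t.leafDepths.map Prod.snd

end BTree

/-- `b ~^d c` : the sequences have equal length and agree at every position where
either entry is `< d`. -/
def DepthEq (d : ℕ) : List ℕ → List ℕ → Prop :=
  List.Forall₂ (fun a b => min a b < d → a = b)

/-- `b ~_k c` : entrywise congruence mod `k` (and equal length). -/
def ModListEq (k : ℕ) : List ℕ → List ℕ → Prop :=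
  List.Forall₂ (fun a b => a % k = b % k)

/-- The relation `t ~ t'` iff `ld(t) ~^d ld(t')` and `rd(t) ~^e rd(t')`. -/
def DeRel (d e : ℕ) (t t' : BTree) : Prop :=
  DepthEq d t.ld t'.ld ∧ DepthEq e t.rd t'.rd

/-- The relation `t ~ t'` iff `ld(t) ~_k^d ld(t')` (i.e. `ld(t) ~_k ld(t')` and
`ld(t) ~^d ld(t')`). -/
def DkRel (d k : ℕ) (t t' : BTree) : Prop :=
  ModListEq k t.ld t'.ld ∧ DepthEq d t.ld t'.ld

/-- `T_n`: full binary trees with `n+1` leaves. -/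
def Tn (n : ℕ) : Type := {t : BTree // t.numLeaves = n + 1}

/-- `C^{d,e}_n`: the number of equivalence classes of the relation `DeRel d e` on `T_n`. -/
noncomputable def Cde (d e n : ℕ) : ℕ :=
  Nat.card (Quot (fun t t' : Tn n => DeRel d e t.1 t'.1))

/-- `C^d_{k,n}`: the number of equivalence classes of `ld(t) ~_k^d ld(t')` on `T_n`. -/
noncomputable def Cdk (d k n : ℕ) : ℕ :=
  Nat.card (Quot (fun t t' : Tn n => DkRel d k t.1 t'.1))

namespace BTree

/-- Suffix languages of the reversed truncated words. -/
def U : ℕ → ℕ → ℕ → Finset (List (ℕ × ℕ))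
  | _, _, 0 => ∅
  | b, x, n + 1 =>
      (if n = 0 then ({[(min (b + 1) 4, 0)]} : Finset (List (ℕ × ℕ)))
        else U (b + 1) (min (b + 1) 4) n).image (List.cons (x, 1)) ∪
      (Finset.Icc (min (b + 1) 4) (min (x + 1) 4)).biUnion
        (fun y => (U b y n).image (List.cons (x, 2)))
termination_by _ _ n => n

/-- Language of reversed truncated words of trees with `n+1` leaves at left depth `b`. -/
def F (b n : ℕ) : Finset (List (ℕ × ℕ)) :=
  if n = 0 then {[(min b 4, 0)]} else U b (min b 4) n

theorem U_zero (b x : ℕ) : U b x 0 = ∅ := by rw [U]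

theorem U_succ (b x n : ℕ) : U b x (n + 1) =
    (F (b + 1) n).image (List.cons (x, 1)) ∪
      (Finset.Icc (min (b + 1) 4) (min (x + 1) 4)).biUnion
        (fun y => (U b y n).image (List.cons (x, 2))) := by
  rw [U, F]

theorem mem_U_succ (b x n : ℕ) (w : List (ℕ × ℕ)) : w ∈ U b x (n + 1) ↔
    (∃ w' ∈ F (b + 1) n, (x, 1) :: w' = w) ∨
    ∃ y, (min (b + 1) 4 ≤ y ∧ y ≤ min (x + 1) 4) ∧ ∃ w' ∈ U b y n, (x, 2) :: w' = w := by
  rw [U_succ, Finset.mem_union, Finset.mem_image, Finset.mem_biUnion]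
  simp only [Finset.mem_image, Finset.mem_Icc]

theorem U_head (b x n : ℕ) (w : List (ℕ × ℕ)) (h : w ∈ U b x n) :
    ∃ m w', w = (x, m) :: w' := by
  cases n with
  | zero => simp [U_zero] at h
  | succ n =>
    rw [mem_U_succ] at h
    rcases h with ⟨w', _, rfl⟩ | ⟨y, _, w', _, rfl⟩
    · exact ⟨_, _, rfl⟩
    · exact ⟨_, _, rfl⟩

theorem card_U_succ (b x n : ℕ) : (U b x (n + 1)).card =
    (F (b + 1) n).card +
      ∑ y ∈ Finset.Icc (min (b + 1) 4) (min (x + 1) 4), (U b y n).card := by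
  rw [U_succ, Finset.card_union_of_disjoint, Finset.card_image_of_injective _ List.cons_injective,
    Finset.card_biUnion]
  · congr 1
    exact Finset.sum_congr rfl
      (fun y _ => Finset.card_image_of_injective _ List.cons_injective)
  · intro y _ z _ hyz
    change Disjoint (Finset.image _ _) (Finset.image _ _)
    rw [Finset.disjoint_left]
    intro w hw hw'
    rw [Finset.mem_image] at hw hw'
    obtain ⟨w1, h1, rfl⟩ := hw
    obtain ⟨w2, h2, h3⟩ := hw'
    obtain ⟨m1, v1, rfl⟩ := U_head _ _ _ _ h1
    obtain ⟨m2, v2, rfl⟩ := U_head _ _ _ _ h2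
    simp at h3
    exact hyz h3.1.1.symm
  · rw [Finset.disjoint_left]
    intro w hw hw'
    rw [Finset.mem_image] at hw
    rw [Finset.mem_biUnion] at hw'
    obtain ⟨w1, h1, rfl⟩ := hw
    obtain ⟨y, _, h2⟩ := hw'
    rw [Finset.mem_image] at h2
    obtain ⟨w2, h2, h3⟩ := h2
    simp at h3

/-- Reversed truncated word. -/
def word (t : BTree) (b : ℕ) : List (ℕ × ℕ) :=
  (t.leafDepths.map (fun p => (min (p.1 + b) 4, min p.2 2))).reverse

/-- Unmarked reversed word of a list of left depths. -/
def mword (b : ℕ) (L : List ℕ) : List (ℕ × ℕ) :=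
  (L.map (fun x => (min (x + b) 4, 2))).reverse

theorem length_leafDepths (t : BTree) : t.leafDepths.length = t.numLeaves := by
  induction t with
  | leaf => rfl
  | node l r hl hr => simp [leafDepths, numLeaves, hl, hr]

theorem length_word (t : BTree) (b : ℕ) : (word t b).length = t.numLeaves := by
  simp [word, length_leafDepths]

theorem length_ld (t : BTree) : t.ld.length = t.numLeaves := by
  simp [ld, length_leafDepths]

theorem ld_leaf : leaf.ld = [0] := rfl

theorem ld_node (l r : BTree) : (node l r).ld = l.ld.map (· + 1) ++ r.ld := by
  simp [ld, leafDepths, Function.comp_def]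

theorem depths_cons (t : BTree) :
    ∃ a rest, t.leafDepths = (a, 0) :: rest ∧ ∀ p ∈ rest, 1 ≤ p.2 := by
  induction t with
  | leaf => exact ⟨0, [], rfl, by simp⟩
  | node l r hl hr =>
    obtain ⟨a, rest, h, h'⟩ := hl
    refine ⟨a + 1, rest.map (fun p => (p.1 + 1, p.2)) ++
      r.leafDepths.map (fun p => (p.1, p.2 + 1)), by simp [leafDepths, h], ?_⟩
    intro p hp
    rw [List.mem_append, List.mem_map, List.mem_map] at hp
    rcases hp with ⟨q, hq, rfl⟩ | ⟨q, hq, rfl⟩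
    · exact h' q hq
    · simp

theorem ld_cons (t : BTree) : ∃ a rest, t.ld = a :: rest := by
  obtain ⟨a, rest, h, _⟩ := depths_cons t
  exact ⟨a, rest.map Prod.fst, by simp [ld, h]⟩

theorem word_node (l r : BTree) (b a : ℕ) (rest : List ℕ) (h : r.ld = a :: rest) :
    word (node l r) b = mword b rest ++ (min (a + b) 4, 1) :: word l (b + 1) := by
  obtain ⟨a', rest', h1, h2⟩ := depths_cons r
  have h3 : a' = a ∧ rest'.map Prod.fst = rest := by
    simpa [ld, h1] using h
  obtain ⟨rfl, rfl⟩ := h3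
  have h4 : rest'.map (fun p => (min (p.1 + b) 4, min (p.2 + 1) 2)) =
      rest'.map (fun p => (min (p.1 + b) 4, 2)) := by
    apply List.map_congr_left
    intro p hp
    have := h2 p hp
    simp
    omega
  simp [word, mword, leafDepths, h1, Function.comp_def, h4, add_assoc, add_comm 1 b]

theorem ins (S : BTree) : ∀ (a j : ℕ) (rest : List ℕ), S.ld = a :: rest → 1 ≤ j → j ≤ a + 1 →
    ∃ S' : BTree, S'.ld = j :: a :: rest := by
  induction S with
  | leaf =>
    intro a j rest h h1 h2
    have : a = 0 ∧ rest = [] := by simpa [ld_leaf, eq_comm] using h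
    obtain ⟨rfl, rfl⟩ := this
    obtain rfl : j = 1 := by omega
    exact ⟨node leaf leaf, rfl⟩
  | node l r hl hr =>
    intro a j rest h h1 h2
    by_cases hj : j = 1
    · subst hj
      exact ⟨node leaf (node l r), by rw [ld_node, h]; rfl⟩
    · obtain ⟨a', rest', h3⟩ := ld_cons l
      rw [ld_node, h3] at h
      simp at h
      obtain ⟨rfl, rfl⟩ := h
      obtain ⟨l', h4⟩ := hl a' (j - 1) rest' h3 (by omega) (by omega)
      refine ⟨node l' r, ?_⟩
      rw [ld_node, h4]
      simp
      omega

theorem decon (T : BTree) : T = leaf ∨ ∃ (j a : ℕ) (rest : List ℕ) (S : BTree),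
    T.ld = j :: a :: rest ∧ S.ld = a :: rest ∧ 1 ≤ j ∧ j ≤ a + 1 := by
  induction T with
  | leaf => exact Or.inl rfl
  | node l r hl hr =>
    right
    rcases hl with rfl | ⟨j, a, rest, S, h1, h2, h3, h4⟩
    · obtain ⟨a, rest, h⟩ := ld_cons r
      exact ⟨1, a, rest, r, by rw [ld_node, h]; rfl, h, le_rfl, by omega⟩
    · exact ⟨j + 1, a + 1, rest.map (· + 1) ++ r.ld, node S r, by simp [ld_node, h1],
        by simp [ld_node, h2], by omega, by omega⟩

theorem sound_aux (b : ℕ) : ∀ (k : ℕ) (r : BTree) (a : ℕ) (rest : List ℕ), r.ld = a :: rest →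
    rest.length = k → ∀ n u, u ∈ U b (min (a + b) 4) n →
    mword b rest ++ u ∈ U b (min b 4) (n + k) := by
  intro k
  induction k with
  | zero =>
    intro r a rest h hk n u hu
    obtain rfl := List.length_eq_zero_iff.mp hk
    rcases decon r with rfl | ⟨j, a', rest', S, h1, _⟩
    · have : a = 0 := by simpa [ld_leaf, eq_comm] using h
      subst this
      simpa [mword] using hu
    · rw [h] at h1
      simp at h1
  | succ k ih =>
    intro r a rest h hk n u hu
    rcases decon r with rfl | ⟨j, a', rest', S, h1, h2, h3, h4⟩
    · rw [ld_leaf] at h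
      simp at h
      rw [h.2] at hk
      simp at hk
    · rw [h] at h1
      simp at h1
      obtain ⟨rfl, rfl⟩ := h1
      have := ih S a' rest' h2 (by simpa using hk) (n + 1) ((min (a' + b) 4, 2) :: u) (by
        rw [mem_U_succ]
        right
        exact ⟨_, ⟨by omega, by omega⟩, u, hu, rfl⟩)
      have e : n + 1 + k = n + (k + 1) := by omega
      rw [e] at this
      simpa [mword] using this

theorem sound (t : BTree) : ∀ b n, t.numLeaves = n + 1 → word t b ∈ F b n := by
  induction t with
  | leaf =>
    intro b n h
    have : n = 0 := by simpa [numLeaves, eq_comm] using h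
    subst this
    simp [F, word, leafDepths]
  | node l r hl hr =>
    intro b n h
    obtain ⟨a, rest, h1⟩ := ld_cons r
    obtain ⟨a', rest', h2⟩ := ld_cons l
    have l1 := length_ld r
    have l2 := length_ld l
    rw [h1] at l1
    rw [h2] at l2
    simp at l1 l2
    simp [numLeaves] at h
    rw [F, if_neg (by omega), word_node l r b a rest h1]
    have e : n = (rest'.length + 1) + rest.length := by omega
    rw [e]
    apply sound_aux b _ r a rest h1 rfl
    rw [mem_U_succ]
    left
    exact ⟨_, hl (b + 1) rest'.length l2.symm, rfl⟩

theorem complete_aux : ∀ (n b x : ℕ) (w : List (ℕ × ℕ)), w ∈ U b x n →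
    ∀ (S : BTree) (a : ℕ) (rest : List ℕ), S.ld = a :: rest → min (a + b) 4 = x →
    w.length = n + 1 ∧ ∃ t, word t b = mword b rest ++ w := by
  intro n
  induction n with
  | zero => intro b x w hw; simp [U_zero] at hw
  | succ n ih =>
    intro b x w hw S a rest hS hx
    rw [mem_U_succ] at hw
    rcases hw with ⟨w', hw', rfl⟩ | ⟨y, ⟨hy1, hy2⟩, w', hw', rfl⟩
    · have : w'.length = n + 1 ∧ ∃ l, word l (b + 1) = w' := by
        rw [F] at hw'
        split_ifs at hw' with hn
        · subst hn
          rw [Finset.mem_singleton] at hw'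
          subst hw'
          exact ⟨rfl, leaf, by simp [word, leafDepths]⟩
        · simpa [mword] using ih (b + 1) _ w' hw' leaf 0 [] rfl (by simp)
      obtain ⟨hl, l, hl'⟩ := this
      refine ⟨by simp [hl], node l S, ?_⟩
      rw [word_node l S b a rest hS, hl', hx]
    · have : ∃ j, 1 ≤ j ∧ j ≤ a + 1 ∧ min (j + b) 4 = y := by
        by_cases h4 : y < 4
        · exact ⟨y - b, by omega, by omega, by omega⟩
        · exact ⟨a + 1, by omega, by omega, by omega⟩
      obtain ⟨j, hj1, hj2, hj3⟩ := this
      obtain ⟨S', hS'⟩ := ins S a j rest hS hj1 hj2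
      obtain ⟨hl, t, ht⟩ := ih b y w' hw' S' j (a :: rest) hS' hj3
      exact ⟨by simp [hl], t, by rw [ht]; simp [mword, hx]⟩

theorem complete (b n : ℕ) (w : List (ℕ × ℕ)) (hw : w ∈ F b n) :
    ∃ t, t.numLeaves = n + 1 ∧ word t b = w := by
  rw [F] at hw
  split_ifs at hw with hn
  · subst hn
    rw [Finset.mem_singleton] at hw
    subst hw
    exact ⟨leaf, rfl, by simp [word, leafDepths]⟩
  · obtain ⟨h1, t, ht⟩ := complete_aux n b _ w hw leaf 0 [] rfl (by simp)
    simp [mword] at ht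
    exact ⟨t, by rw [← length_word t b, ht, h1], ht⟩

theorem depthEq_iff (d : ℕ) (a b : List ℕ) :
    DepthEq d a b ↔ a.map (fun x => min x d) = b.map (fun x => min x d) := by
  rw [DepthEq, ← List.forall₂_eq_eq_eq, List.forall₂_map_left_iff, List.forall₂_map_right_iff]
  have : (fun a b : ℕ => min a b < d → a = b) = fun a c => min a d = min c d := by
    funext a b
    apply propext
    omega
  rw [this]

theorem pairs_eq (l l' : List (ℕ × ℕ)) :
    l = l' ↔ l.map Prod.fst = l'.map Prod.fst ∧ l.map Prod.snd = l'.map Prod.snd := by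
  constructor
  · rintro rfl
    exact ⟨rfl, rfl⟩
  · induction l generalizing l' with
    | nil =>
      intro h
      cases l' with
      | nil => rfl
      | cons q l' => simp at h
    | cons p l ih =>
      intro h
      cases l' with
      | nil => simp at h
      | cons q l' =>
        simp only [List.map_cons, List.cons.injEq] at h ⊢
        exact ⟨Prod.ext h.1.1 h.2.1, ih l' ⟨h.1.2, h.2.2⟩⟩

theorem deRel_iff (t t' : BTree) : DeRel 4 2 t t' ↔ word t 0 = word t' 0 := by
  rw [DeRel, depthEq_iff, depthEq_iff, word, word, List.reverse_inj, pairs_eq]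
  simp [ld, rd, Function.comp_def]

theorem Cde_eq (n : ℕ) : Cde 4 2 n = (F 0 n).card := by
  rw [Cde, ← Nat.card_eq_finsetCard]
  let f : Quot (fun t t' : Tn n => DeRel 4 2 t.1 t'.1) → F 0 n :=
    Quot.lift (fun t => ⟨word t.1 0, sound t.1 0 n t.2⟩)
      (fun t t' h => Subtype.ext ((deRel_iff t.1 t'.1).mp h))
  apply Nat.card_eq_of_bijective f
  constructor
  · rintro ⟨t⟩ ⟨t'⟩ h
    exact Quot.sound ((deRel_iff t.1 t'.1).mpr (congrArg Subtype.val h))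
  · rintro ⟨w, hw⟩
    obtain ⟨t, h1, h2⟩ := complete 0 n w hw
    exact ⟨Quot.mk _ ⟨t, h1⟩, Subtype.ext h2⟩

theorem card_F_zero (b : ℕ) : (F b 0).card = 1 := by simp [F]

theorem F_succ (b n : ℕ) : F b (n + 1) = U b (min b 4) (n + 1) := by simp [F]

theorem U_big (n : ℕ) : ∀ b, 4 ≤ b → (U b 4 (n + 1)).card = 2 ^ n := by
  induction n with
  | zero =>
    intro b hb
    rw [card_U_succ, card_F_zero]
    simp [U_zero]
  | succ n ih =>
    intro b hb
    have e : min (b + 1) 4 = 4 := by omega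
    rw [card_U_succ, F_succ, e, ih _ (by omega)]
    simp [ih b hb, pow_succ]
    omega

/-- The linear system. -/
theorem system (n : ℕ) :
    (U 0 0 (n+2)).card = (U 1 1 (n+1)).card + (U 0 1 (n+1)).card ∧
    (U 0 1 (n+2)).card = (U 1 1 (n+1)).card + (U 0 1 (n+1)).card + (U 0 2 (n+1)).card ∧
    (U 0 2 (n+2)).card = (U 1 1 (n+1)).card + (U 0 1 (n+1)).card + (U 0 2 (n+1)).card
      + (U 0 3 (n+1)).card ∧
    (U 0 3 (n+2)).card = (U 1 1 (n+1)).card + (U 0 1 (n+1)).card + (U 0 2 (n+1)).card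
      + (U 0 3 (n+1)).card + (U 0 4 (n+1)).card ∧
    (U 0 4 (n+2)).card = (U 1 1 (n+1)).card + (U 0 1 (n+1)).card + (U 0 2 (n+1)).card
      + (U 0 3 (n+1)).card + (U 0 4 (n+1)).card ∧
    (U 1 1 (n+2)).card = (U 2 2 (n+1)).card + (U 1 2 (n+1)).card ∧
    (U 1 2 (n+2)).card = (U 2 2 (n+1)).card + (U 1 2 (n+1)).card + (U 1 3 (n+1)).card ∧
    (U 1 3 (n+2)).card = (U 2 2 (n+1)).card + (U 1 2 (n+1)).card + (U 1 3 (n+1)).card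
      + (U 1 4 (n+1)).card ∧
    (U 1 4 (n+2)).card = (U 2 2 (n+1)).card + (U 1 2 (n+1)).card + (U 1 3 (n+1)).card
      + (U 1 4 (n+1)).card ∧
    (U 2 2 (n+2)).card = (U 3 3 (n+1)).card + (U 2 3 (n+1)).card ∧
    (U 2 3 (n+2)).card = (U 3 3 (n+1)).card + (U 2 3 (n+1)).card + (U 2 4 (n+1)).card ∧
    (U 2 4 (n+2)).card = (U 3 3 (n+1)).card + (U 2 3 (n+1)).card + (U 2 4 (n+1)).card ∧
    (U 3 3 (n+2)).card = (U 4 4 (n+1)).card + (U 3 4 (n+1)).card ∧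
    (U 3 4 (n+2)).card = (U 4 4 (n+1)).card + (U 3 4 (n+1)).card ∧
    (U 4 4 (n+2)).card = 2 * (U 4 4 (n+1)).card := by
  have i1 : Finset.Icc 1 2 = {1, 2} := by decide
  have i2 : Finset.Icc 1 3 = {1, 2, 3} := by decide
  have i3 : Finset.Icc 1 4 = {1, 2, 3, 4} := by decide
  have i4 : Finset.Icc 2 3 = {2, 3} := by decide
  have i5 : Finset.Icc 2 4 = {2, 3, 4} := by decide
  have i6 : Finset.Icc 3 4 = {3, 4} := by decide
  have h : ∀ b x, (U b x (n+2)).card = (U (b+1) (min (b+1) 4) (n+1)).card +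
      ∑ y ∈ Finset.Icc (min (b + 1) 4) (min (x + 1) 4), (U b y (n+1)).card := by
    intro b x
    rw [card_U_succ, F_succ]
  refine ⟨?_, ?_, ?_, ?_, ?_, ?_, ?_, ?_, ?_, ?_, ?_, ?_, ?_, ?_, ?_⟩
  on_goal 15 => rw [U_big _ _ le_rfl, U_big _ _ le_rfl]; ring
  all_goals
    rw [h]
    simp [i1, i2, i3, i4, i5, i6]
    try ring

theorem U_one (b x : ℕ) : (U b x 1).card = 1 := by
  rw [card_U_succ, card_F_zero]
  simp [U_zero]

theorem coll (n : ℕ) : (U 0 3 (n+1)).card = (U 0 4 (n+1)).card ∧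
    (U 1 3 (n+1)).card = (U 1 4 (n+1)).card ∧
    (U 2 3 (n+1)).card = (U 2 4 (n+1)).card ∧ (U 3 3 (n+1)).card = (U 4 4 (n+1)).card ∧
    (U 3 4 (n+1)).card = (U 4 4 (n+1)).card := by
  induction n with
  | zero => simp [U_one]
  | succ n ih =>
    obtain ⟨-, -, -, a1, a2, -, -, a3, a4, -, a5, a6, a7, a8, a9⟩ := system n
    obtain ⟨-, -, -, -, b⟩ := ih
    refine ⟨a1.trans a2.symm, a3.trans a4.symm, a5.trans a6.symm, ?_, ?_⟩
    · rw [Nat.add_assoc, a7, a9]; omega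
    · rw [Nat.add_assoc, a8, a9]; omega

theorem main_aux (n : ℕ) :
    2 * ((U 0 1 (n+3)).card + (U 0 4 (n+3)).card + (U 1 1 (n+3)).card + (U 1 4 (n+3)).card
      + (U 2 4 (n+3)).card + (U 4 4 (n+3)).card : ℤ) =
      4 * (U 0 2 (n+3)).card + 4 * (U 1 2 (n+3)).card + 4 * (U 2 2 (n+3)).card
      + (U 4 4 (n+3)).card ∧
    12 * ((U 0 0 (n+3)).card + (U 0 4 (n+3)).card + (U 1 4 (n+3)).card
      + (U 2 4 (n+3)).card + (U 4 4 (n+3)).card : ℤ) =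
      20 * (U 0 2 (n+3)).card + 20 * (U 1 2 (n+3)).card + 20 * (U 2 2 (n+3)).card
      + 7 * (U 4 4 (n+3)).card ∧
    ((U 0 0 (n+3)).card : ℤ) = 1 + 5 * 3 ^ n - 2 ^ n ∧
    ((U 0 0 (n+4)).card : ℤ) = 1 + 15 * 3 ^ n - 2 * 2 ^ n ∧
    ((U 0 0 (n+5)).card : ℤ) = 1 + 45 * 3 ^ n - 4 * 2 ^ n := by
  induction n with
  | zero =>
    have s0 := system 0
    have s1 := system 1
    have s2 := system 2
    have s3 := system 3
    simp only [Nat.zero_add, Nat.reduceAdd, U_one] at s0 s1 s2 s3 ⊢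
    simp only [s0, Nat.reduceAdd, Nat.reduceMul] at s1
    simp only [s1, Nat.reduceAdd, Nat.reduceMul] at s2
    simp only [s2, Nat.reduceAdd, Nat.reduceMul] at s3
    simp only [s1, s2, s3]
    norm_num
  | succ n ih =>
    have s1 := system (n + 2)
    have s2 := system (n + 3)
    have s3 := system (n + 4)
    have c := coll (n + 2)
    simp only [Nat.add_assoc, Nat.reduceAdd, pow_succ] at s1 s2 s3 c ih ⊢
    simp only [c] at s1
    obtain ⟨i1, i2, i3, i4, i5⟩ := ih
    refine ⟨?_, ?_, ?_, ?_, ?_⟩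
    · simp only [s1]; push_cast; linarith
    · simp only [s1, s2] at i4 ⊢; push_cast at i4 ⊢; linarith
    · rw [i4]; ring
    · rw [i5]; ring
    · simp only [s1, s2, s3] at i4 i5 ⊢; push_cast at i4 i5 ⊢; linarith

end BTree

/-- for `n ≥ 3`, `C^{4,2}_n = 1 + 5·3^{n-3} - 2^{n-3}`. -/
theorem stmt8 (n : ℕ) (hn : 3 ≤ n) :
    (Cde 4 2 n : ℤ) = 1 + 5 * 3 ^ (n - 3) - 2 ^ (n - 3) := by
  obtain ⟨m, rfl⟩ := Nat.exists_eq_add_of_le' hn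
  rw [BTree.Cde_eq, BTree.F_succ, Nat.add_sub_cancel]
  exact (BTree.main_aux m).2.2.1
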